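/- Let α > 0, β > 0 with α ≠ β, and let (ρ_n) and (r_n) be sequences of positive reals with ρ_n → 0 and r_n²·ρ_n → ∞. Then the Rényi-1/2 divergence I_n = −2 r_n² · log( √((1−αρ_n)(1−βρ_n)) + ρ_n√(αβ) ) tends to +∞ as n → ∞. -/

import Mathlib

open Filter

/-- If `α, β > 0`, `α ≠ β`, `ρ_n → 0` and `r_n²ρ_n → ∞`, then the
Rényi-1/2 divergence `I_n = −2r_n²·log(√((1−αρ_n)(1−βρ_n)) + ρ_n√(αβ))` tends to `+∞`. -/
theorem renyi_half_tendsto_atTop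
    (α β : ℝ) (hα : 0 < α) (hβ : 0 < β) (hαβ : α ≠ β)
    (ρ r : ℕ → ℝ) (hρpos : ∀ n, 0 < ρ n) (hrpos : ∀ n, 0 < r n)
    (hρ0 : Tendsto ρ atTop (nhds 0))
    (hr2ρ : Tendsto (fun n => r n ^ 2 * ρ n) atTop atTop) :
    Tendsto (fun n => -2 * r n ^ 2 *
        Real.log (Real.sqrt ((1 - α * ρ n) * (1 - β * ρ n)) + ρ n * Real.sqrt (α * β)))
      atTop atTop := by
  have hs : Real.sqrt (α * β) < (α + β) / 2 := by
    rw [Real.sqrt_lt' (by positivity)]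
    have := sq_pos_of_ne_zero (sub_ne_zero.mpr hαβ)
    nlinarith
  have hs0 : 0 < Real.sqrt (α * β) := Real.sqrt_pos.mpr (mul_pos hα hβ)
  have hc : 0 < 2 * ((α + β) / 2 - Real.sqrt (α * β)) := by linarith
  refine tendsto_atTop_mono' atTop ?_ (hr2ρ.const_mul_atTop hc)
  have h1 : ∀ᶠ n in atTop, ρ n < 1 / (α + β) :=
    hρ0.eventually_lt_const (by positivity)
  filter_upwards [h1] with n hn
  have hp := hρpos n
  rw [lt_div_iff₀ (by positivity)] at hn
  have ha : 0 < α * ρ n := mul_pos hα hp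
  have hb : 0 < β * ρ n := mul_pos hβ hp
  have h2 : Real.sqrt ((1 - α * ρ n) * (1 - β * ρ n)) ≤ 1 - (α + β) / 2 * ρ n := by
    apply Real.sqrt_le_iff.mpr
    constructor
    · nlinarith
    · nlinarith [sq_nonneg (α * ρ n - β * ρ n)]
  have hX : 0 < Real.sqrt ((1 - α * ρ n) * (1 - β * ρ n)) + ρ n * Real.sqrt (α * β) := by
    positivity
  have h3 := Real.log_le_sub_one_of_pos hX
  have h4 : Real.log (Real.sqrt ((1 - α * ρ n) * (1 - β * ρ n)) + ρ n * Real.sqrt (α * β))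
      ≤ -(((α + β) / 2 - Real.sqrt (α * β)) * ρ n) := by
    linarith
  have h5 := mul_le_mul_of_nonneg_left h4 (sq_nonneg (r n))
  linarith
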